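/- arXiv:1403.5394 — 2 statements merged into one kernel-verified Lean document; each statement's English description precedes it below -/
import Mathlib

section
/- Three-stage order-3 tableau with c_3 = 1 (Corollary 'co 3 stage'(ii)): let c_2 ∈ (0,1) with c_2 ≠ 2/3. Real numbers b_1, b_2, b_3, a_{31}, a_{32}, β_1, β_2 satisfy b_1 + b_2 + b_3 = 1, b_2 c_2 + b_3 = 1/2, b_2 c_2² + b_3 = 1/3, b_3 a_{32} c_2 = 1/6, a_{31} + a_{32} = 1, β_1 + β_2 = 1, β_2 c_2 = 1/2, if and only if b_1 = (3c_2 − 1)/(6 c_2), b_2 = 1/(6 c_2 (1 − c_2)), b_3 = (2 − 3 c_2)/(6 (1 − c_2)), a_{31} = (3c_2 − 3c_2² − 1)/(c_2(2 − 3c_2)), a_{32} = (1 − c_2)/(c_2(2 − 3c_2)), β_1 = 1 − 1/(2c_2), β_2 = 1/(2c_2). -/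
/-!
The order conditions form a triangular system. The weights `bᵢ` are those of the interpolatory
quadrature rule on `[0, 1]` with nodes `0`, `c₂`, `c₃`, hence solve a Vandermonde system with
moments `1`, `1/2`, `1/3`. Once `b₃ ≠ 0` is known, the coupling condition `b₃ a₃₂ c₂ = 1/6` gives
`a₃₂`, and the row sum gives `a₃₁`. The weights `βᵢ` form a separate system on the nodes `0`, `c₂`.
-/

section MomentSystems

variable {K : Type*} [Field K] {s t : K}

theorem add_eq_and_mul_eq_iff (hs : s ≠ 0) {m₀ m₁ w₀ w₁ : K} :
    (w₀ + w₁ = m₀ ∧ w₁ * s = m₁) ↔ (w₀ = m₀ - m₁ / s ∧ w₁ = m₁ / s) := by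
  rw [← eq_sub_iff_add_eq, ← eq_div_iff hs]
  exact and_congr_left fun h => by rw [h]

theorem two_moments_iff (hs : s ≠ 0) (ht : t ≠ 0) (hst : s ≠ t) {m₁ m₂ w₁ w₂ : K} :
    (w₁ * s + w₂ * t = m₁ ∧ w₁ * s ^ 2 + w₂ * t ^ 2 = m₂) ↔
      (w₁ = (m₁ * t - m₂) / (s * (t - s)) ∧ w₂ = (m₂ - m₁ * s) / (t * (t - s))) := by
  have hts : t - s ≠ 0 := sub_ne_zero.mpr hst.symm
  constructor
  · rintro ⟨h₁, h₂⟩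
    rw [eq_div_iff (mul_ne_zero hs hts), eq_div_iff (mul_ne_zero ht hts)]
    exact ⟨by linear_combination t * h₁ - h₂, by linear_combination h₂ - s * h₁⟩
  · rintro ⟨rfl, rfl⟩
    constructor <;> field_simp <;> ring

theorem three_moments_iff (hs : s ≠ 0) (ht : t ≠ 0) (hst : s ≠ t) {m₀ m₁ m₂ w₀ w₁ w₂ : K} :
    (w₀ + w₁ + w₂ = m₀ ∧ w₁ * s + w₂ * t = m₁ ∧ w₁ * s ^ 2 + w₂ * t ^ 2 = m₂) ↔
      (w₀ = (m₀ * (s * t) - m₁ * (s + t) + m₂) / (s * t) ∧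
        w₁ = (m₁ * t - m₂) / (s * (t - s)) ∧ w₂ = (m₂ - m₁ * s) / (t * (t - s))) := by
  rw [two_moments_iff hs ht hst]
  refine and_congr_left ?_
  rintro ⟨rfl, rfl⟩
  have hts : t - s ≠ 0 := sub_ne_zero.mpr hst.symm
  have remaining_weight :
      m₀ - (m₂ - m₁ * s) / (t * (t - s)) - (m₁ * t - m₂) / (s * (t - s)) =
        (m₀ * (s * t) - m₁ * (s + t) + m₂) / (s * t) := by
    field_simp
    ring
  rw [← eq_sub_iff_add_eq, ← eq_sub_iff_add_eq, remaining_weight]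

end MomentSystems

section OrderThree

variable {K : Type*} [Field K] [NeZero (2 : K)] [NeZero (3 : K)] {c₂ c₃ : K}

theorem six_ne_zero : (6 : K) ≠ 0 := by
  rw [show (6 : K) = 2 * 3 by norm_num]
  exact mul_ne_zero two_ne_zero three_ne_zero

theorem orderThree_weights_iff (h₂ : c₂ ≠ 0) (h₃ : c₃ ≠ 0) (h₂₃ : c₂ ≠ c₃) {b₁ b₂ b₃ : K} :
    (b₁ + b₂ + b₃ = 1 ∧ b₂ * c₂ + b₃ * c₃ = 1 / 2 ∧ b₂ * c₂ ^ 2 + b₃ * c₃ ^ 2 = 1 / 3) ↔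
      (b₁ = (6 * c₂ * c₃ - 3 * (c₂ + c₃) + 2) / (6 * c₂ * c₃) ∧
        b₂ = (3 * c₃ - 2) / (6 * c₂ * (c₃ - c₂)) ∧
        b₃ = (2 - 3 * c₂) / (6 * c₃ * (c₃ - c₂))) := by
  have hsub : c₃ - c₂ ≠ 0 := sub_ne_zero.mpr h₂₃.symm
  have six_ne : (6 : K) ≠ 0 := six_ne_zero
  rw [three_moments_iff h₂ h₃ h₂₃]
  refine and_congr (Eq.congr_right ?_) (and_congr (Eq.congr_right ?_) (Eq.congr_right ?_)) <;>
    field_simp <;> ring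

theorem orderThree_stage_iff (h₂ : c₂ ≠ 0) (h₃ : c₃ ≠ 0) (h₂₃ : c₂ ≠ c₃) (hc : c₂ ≠ 2 / 3)
    {b₃ a₃₁ a₃₂ : K} (hb₃ : b₃ = (2 - 3 * c₂) / (6 * c₃ * (c₃ - c₂))) :
    (b₃ * a₃₂ * c₂ = 1 / 6 ∧ a₃₁ + a₃₂ = c₃) ↔
      (a₃₁ = c₃ * (3 * c₂ - 3 * c₂ ^ 2 - c₃) / (c₂ * (2 - 3 * c₂)) ∧
        a₃₂ = c₃ * (c₃ - c₂) / (c₂ * (2 - 3 * c₂))) := by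
  have six_ne : (6 : K) ≠ 0 := six_ne_zero
  have hsub : c₃ - c₂ ≠ 0 := sub_ne_zero.mpr h₂₃.symm
  have hlin : 2 - 3 * c₂ ≠ 0 := fun h =>
    hc (by rw [eq_div_iff three_ne_zero]; linear_combination -h)
  have hpivot : b₃ * c₂ ≠ 0 := by
    rw [hb₃]
    exact mul_ne_zero (div_ne_zero hlin (mul_ne_zero (mul_ne_zero six_ne h₃) hsub)) h₂
  have ha₃₂ : 1 / 6 / (b₃ * c₂) = c₃ * (c₃ - c₂) / (c₂ * (2 - 3 * c₂)) := by
    rw [hb₃]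
    field_simp
  have ha₃₁ : c₃ - c₃ * (c₃ - c₂) / (c₂ * (2 - 3 * c₂)) =
      c₃ * (3 * c₂ - 3 * c₂ ^ 2 - c₃) / (c₂ * (2 - 3 * c₂)) := by
    have hden : c₂ * (2 - 3 * c₂) ≠ 0 := mul_ne_zero h₂ hlin
    rw [eq_div_iff hden, sub_mul, div_mul_cancel₀ _ hden]
    ring
  rw [and_comm, mul_right_comm, mul_comm _ a₃₂, add_eq_and_mul_eq_iff hpivot, ha₃₂, ha₃₁]

theorem stmt13_general (hc0 : c₂ ≠ 0) (hc1 : c₂ ≠ 1) (hc : c₂ ≠ 2 / 3)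
    (b₁ b₂ b₃ a₃₁ a₃₂ β₁ β₂ : K) :
    (b₁ + b₂ + b₃ = 1 ∧ b₂ * c₂ + b₃ = 1 / 2 ∧ b₂ * c₂ ^ 2 + b₃ = 1 / 3 ∧
        b₃ * a₃₂ * c₂ = 1 / 6 ∧ a₃₁ + a₃₂ = 1 ∧ β₁ + β₂ = 1 ∧ β₂ * c₂ = 1 / 2)
      ↔ (b₁ = (3 * c₂ - 1) / (6 * c₂) ∧ b₂ = 1 / (6 * c₂ * (1 - c₂)) ∧
          b₃ = (2 - 3 * c₂) / (6 * (1 - c₂)) ∧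
          a₃₁ = (3 * c₂ - 3 * c₂ ^ 2 - 1) / (c₂ * (2 - 3 * c₂)) ∧
          a₃₂ = (1 - c₂) / (c₂ * (2 - 3 * c₂)) ∧
          β₁ = 1 - 1 / (2 * c₂) ∧ β₂ = 1 / (2 * c₂)) := by
  have weights :
      (b₁ + b₂ + b₃ = 1 ∧ b₂ * c₂ + b₃ = 1 / 2 ∧ b₂ * c₂ ^ 2 + b₃ = 1 / 3) ↔
        (b₁ = (3 * c₂ - 1) / (6 * c₂) ∧ b₂ = 1 / (6 * c₂ * (1 - c₂)) ∧
          b₃ = (2 - 3 * c₂) / (6 * (1 - c₂))) := by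
    convert orderThree_weights_iff hc0 one_ne_zero hc1 using 4 <;> ring
  have stage (hb₃ : b₃ = (2 - 3 * c₂) / (6 * (1 - c₂))) :
      (b₃ * a₃₂ * c₂ = 1 / 6 ∧ a₃₁ + a₃₂ = 1) ↔
        (a₃₁ = (3 * c₂ - 3 * c₂ ^ 2 - 1) / (c₂ * (2 - 3 * c₂)) ∧
          a₃₂ = (1 - c₂) / (c₂ * (2 - 3 * c₂))) := by
    simpa only [one_mul] using orderThree_stage_iff hc0 one_ne_zero hc1 hc (by rwa [mul_one])
  have z_weights : (β₁ + β₂ = 1 ∧ β₂ * c₂ = 1 / 2) ↔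
      (β₁ = 1 - 1 / (2 * c₂) ∧ β₂ = 1 / (2 * c₂)) := by
    simpa only [div_div] using add_eq_and_mul_eq_iff hc0 (m₀ := 1) (m₁ := 1 / 2)
  constructor
  · rintro ⟨hm₀, hm₁, hm₂, hcoupling, hrow, hβ⟩
    have hb := weights.mp ⟨hm₀, hm₁, hm₂⟩
    have ha := (stage hb.2.2).mp ⟨hcoupling, hrow⟩
    exact ⟨hb.1, hb.2.1, hb.2.2, ha.1, ha.2, z_weights.mp hβ⟩
  · rintro ⟨hb₁, hb₂, hb₃, ha₃₁, ha₃₂, hβ⟩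
    have hb := weights.mpr ⟨hb₁, hb₂, hb₃⟩
    have ha := (stage hb₃).mpr ⟨ha₃₁, ha₃₂⟩
    exact ⟨hb.1, hb.2.1, hb.2.2, ha.1, ha.2, z_weights.mpr hβ⟩

end OrderThree

/-- Three-stage order-3 tableau with `c₃ = 1` (Corollary `co 3 stage`(ii)):
for `c₂ ∈ (0,1)` with `c₂ ≠ 2/3`, the order-3 conditions
`b₁ + b₂ + b₃ = 1`, `b₂ c₂ + b₃ = 1/2`, `b₂ c₂² + b₃ = 1/3`, `b₃ a₃₂ c₂ = 1/6`,
`a₃₁ + a₃₂ = 1`, `β₁ + β₂ = 1`, `β₂ c₂ = 1/2` hold if and only if the coefficients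
take the explicit tableau values. -/
theorem stmt13 (c₂ : ℝ) (hc0 : 0 < c₂) (hc1 : c₂ < 1) (hc₂' : c₂ ≠ 2 / 3)
    (b₁ b₂ b₃ a₃₁ a₃₂ β₁ β₂ : ℝ) :
    (b₁ + b₂ + b₃ = 1 ∧ b₂ * c₂ + b₃ = 1 / 2 ∧ b₂ * c₂ ^ 2 + b₃ = 1 / 3 ∧
        b₃ * a₃₂ * c₂ = 1 / 6 ∧ a₃₁ + a₃₂ = 1 ∧ β₁ + β₂ = 1 ∧ β₂ * c₂ = 1 / 2)
      ↔ (b₁ = (3 * c₂ - 1) / (6 * c₂) ∧ b₂ = 1 / (6 * c₂ * (1 - c₂)) ∧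
          b₃ = (2 - 3 * c₂) / (6 * (1 - c₂)) ∧
          a₃₁ = (3 * c₂ - 3 * c₂ ^ 2 - 1) / (c₂ * (2 - 3 * c₂)) ∧
          a₃₂ = (1 - c₂) / (c₂ * (2 - 3 * c₂)) ∧
          β₁ = 1 - 1 / (2 * c₂) ∧ β₂ = 1 / (2 * c₂)) := by
  exact stmt13_general hc0.ne' hc1.ne hc₂' b₁ b₂ b₃ a₃₁ a₃₂ β₁ β₂
end

section
/- Algebraic order barrier for four-stage schemes (algebraic content of Theorem 'th explicit barrier' via Lemma 'le o4 conditions'): let c_2, c_3 ∈ ℝ with 0 < c_2 < c_3 < 1 and c_2 ≠ 2/3. Then there exist no real numbers c_4, b_1, b_2, b_3, b_4, β_1, β_2, β_3, α_{32}, α_{42}, α_{43} satisfying simultaneously the Y-part order-4 conditions: b_1 + b_2 + b_3 + b_4 = 1; b_2 c_2 + b_3 c_3 + b_4 c_4 = 1/2; b_2 c_2² + b_3 c_3² + b_4 c_4² = 1/3; b_2 c_2³ + b_3 c_3³ + b_4 c_4³ = 1/4; b_3 α_{32} c_2 + b_4 α_{42} c_2 + b_4 α_{43} c_3 = 1/6;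 b_3 c_3 α_{32} c_2 + b_4 c_4 α_{42} c_2 + b_4 c_4 α_{43} c_3 = 1/8; b_3 α_{32} c_2² + b_4 α_{42} c_2² + b_4 α_{43} c_3² = 1/12; b_4 α_{43} α_{32} c_2 = 1/24; and the Z-part order-4 conditions: β_1 + β_2 + β_3 = 1; β_2 c_2 + β_3 c_3 = 1/2; β_2 c_2² + β_3 c_3² = 1/3; β_3 α_{32} c_2 = 1/6. -/
/-!
Eliminating the weight at `c₂` from the two conditions that are linear and quadratic in the nodes
isolates the weight at `c₃`. Only the path `4 → 3` of the tableau survives in the `Y`-part, giving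
`b₄ α₄₃ c₃ (c₃ - c₂) = 1/12 - c₂/6`, and the `Z`-part gives `β₃ c₃ (c₃ - c₂) = 1/3 - c₂/2`.
The conditions `b₄ α₄₃ α₃₂ c₂ = 1/24` and `β₃ α₃₂ c₂ = 1/6` force `β₃ = 4 b₄ α₄₃`, so that
`1/3 - c₂/2 = 1/3 - 2c₂/3`. Hence `c₂ = 0`, which contradicts `β₃ α₃₂ c₂ = 1/6`.
-/

section CommRing

variable {R : Type*} [CommRing R]

theorem weight_mul_node_mul_sub_of_moments {x y p q m₁ m₂ : R} (h₁ : p * x + q * y = m₁)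
    (h₂ : p * x ^ 2 + q * y ^ 2 = m₂) : q * (y * (y - x)) = m₂ - x * m₁ := by
  linear_combination h₂ - x * h₁

theorem eq_four_mul_of_six_mul_eq_one {β w t : R} (hβ : 6 * (β * t) = 1)
    (hw : 24 * (w * t) = 1) : β = 4 * w := by
  have β_mul : β * (6 * t) = 1 := by linear_combination hβ
  have mul_four_w : 6 * t * (4 * w) = 1 := by linear_combination hw
  exact left_inv_eq_right_inv β_mul mul_four_w

/-- The denominators are cleared so that the conditions make sense in any commutative ring. -/
theorem stmt15_general [Nontrivial R] (c₂ c₃ : R) :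
    ¬∃ b₃ b₄ β₂ β₃ α₃₂ α₄₂ α₄₃ : R,
      (6 * (b₃ * α₃₂ * c₂ + b₄ * α₄₂ * c₂ + b₄ * α₄₃ * c₃) = 1 ∧
       12 * (b₃ * α₃₂ * c₂ ^ 2 + b₄ * α₄₂ * c₂ ^ 2 + b₄ * α₄₃ * c₃ ^ 2) = 1 ∧
       24 * (b₄ * α₄₃ * α₃₂ * c₂) = 1) ∧
      (2 * (β₂ * c₂ + β₃ * c₃) = 1 ∧
       3 * (β₂ * c₂ ^ 2 + β₃ * c₃ ^ 2) = 1 ∧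
       6 * (β₃ * α₃₂ * c₂) = 1) := by
  rintro ⟨b₃, b₄, β₂, β₃, α₃₂, α₄₂, α₄₃, ⟨hY₁, hY₂, hY⟩, hZ₁, hZ₂, hZ⟩
  have weight_eq : β₃ = 4 * (b₄ * α₄₃) :=
    eq_four_mul_of_six_mul_eq_one (t := α₃₂ * c₂) (by linear_combination hZ)
      (by linear_combination hY)
  have weight_Y : 12 * (b₄ * α₄₃) * (c₃ * (c₃ - c₂)) = 1 - c₂ * 2 :=
    weight_mul_node_mul_sub_of_moments (p := 12 * (b₃ * α₃₂ + b₄ * α₄₂))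
      (by linear_combination 2 * hY₁) (by linear_combination hY₂)
  have weight_Z : 6 * β₃ * (c₃ * (c₃ - c₂)) = 2 - c₂ * 3 :=
    weight_mul_node_mul_sub_of_moments (p := 6 * β₂)
      (by linear_combination 3 * hZ₁) (by linear_combination 2 * hZ₂)
  have c₂_eq_zero : c₂ = 0 := by
    linear_combination 2 * weight_Y - weight_Z + 6 * (c₃ * (c₃ - c₂)) * weight_eq
  simp [c₂_eq_zero] at hZ

end CommRing

/-- Algebraic order barrier for four-stage schemes (algebraic content of Theorem
`th explicit barrier` via Lemma `le o4 conditions`): for `0 < c₂ < c₃ < 1` with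
`c₂ ≠ 2/3`, no real coefficients can satisfy simultaneously the `Y`-part order-4
conditions and the `Z`-part order-4 conditions. -/
theorem stmt15 (c₂ c₃ : ℝ) (hc₂ : 0 < c₂) (hc₂₃ : c₂ < c₃) (hc₃ : c₃ < 1)
    (hc₂' : c₂ ≠ 2 / 3) :
    ¬∃ c₄ b₁ b₂ b₃ b₄ β₁ β₂ β₃ α₃₂ α₄₂ α₄₃ : ℝ,
      -- Y-part order-4 conditions
      (b₁ + b₂ + b₃ + b₄ = 1 ∧
       b₂ * c₂ + b₃ * c₃ + b₄ * c₄ = 1 / 2 ∧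
       b₂ * c₂ ^ 2 + b₃ * c₃ ^ 2 + b₄ * c₄ ^ 2 = 1 / 3 ∧
       b₂ * c₂ ^ 3 + b₃ * c₃ ^ 3 + b₄ * c₄ ^ 3 = 1 / 4 ∧
       b₃ * α₃₂ * c₂ + b₄ * α₄₂ * c₂ + b₄ * α₄₃ * c₃ = 1 / 6 ∧
       b₃ * c₃ * α₃₂ * c₂ + b₄ * c₄ * α₄₂ * c₂ + b₄ * c₄ * α₄₃ * c₃ = 1 / 8 ∧
       b₃ * α₃₂ * c₂ ^ 2 + b₄ * α₄₂ * c₂ ^ 2 + b₄ * α₄₃ * c₃ ^ 2 = 1 / 12 ∧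
       b₄ * α₄₃ * α₃₂ * c₂ = 1 / 24) ∧
      -- Z-part order-4 conditions
      (β₁ + β₂ + β₃ = 1 ∧
       β₂ * c₂ + β₃ * c₃ = 1 / 2 ∧
       β₂ * c₂ ^ 2 + β₃ * c₃ ^ 2 = 1 / 3 ∧
       β₃ * α₃₂ * c₂ = 1 / 6) := by
  rintro ⟨_, _, _, b₃, b₄, _, β₂, β₃, α₃₂, α₄₂, α₄₃,
    ⟨_, _, _, _, hY₁, _, hY₂, hY⟩, _, hZ₁, hZ₂, hZ⟩
  refine stmt15_general c₂ c₃ ⟨b₃, b₄, β₂, β₃, α₃₂, α₄₂, α₄₃, ⟨?_, ?_, ?_⟩, ?_, ?_, ?_⟩ <;> linarith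
end
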